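/- Let ψ be a unit vector in ℂ^{d₁} ⊗ ℂ^{d₂} ⊗ ℂ^{d₃} ⊗ ℂ^{d₄}. Then V₁₂₃₄(ψ) > 0 if and only if ψ is genuinely multipartite entangled, i.e. for every nonempty proper subset S of {1,2,3,4} there exist no vectors u (on the subsystems in S) and v (on the subsystems in the complement Sᶜ) with ψ(x) = u(x_S)·v(x_{Sᶜ}) for all indices x. -/

import Mathlib

open scoped BigOperators

/-- The reduced density matrix on the first factor of a bipartite pure state:
`ρ₁ i i' = ∑ j, ψ (i, j) * conj (ψ (i', j))`. -/
noncomputable def redMat {α β : Type*} [Fintype β] (ψ : α × β → ℂ) : Matrix α α ℂ :=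
  Matrix.of fun i i' => ∑ j, ψ (i, j) * (starRingEnd ℂ) (ψ (i', j))

/-- The concurrence `C(ψ) = √(2(1 − Tr(ρ₁²)))` of a bipartite pure state. -/
noncomputable def conc {α β : Type*} [Fintype α] [Fintype β] (ψ : α × β → ℂ) : ℝ :=
  Real.sqrt (2 * (1 - (Matrix.trace (redMat ψ * redMat ψ)).re))

section FourPartite

variable {d₁ d₂ d₃ d₄ : ℕ}

/-- Bipartition concurrence `C_{1|234}`. -/
noncomputable def C1 (ψ : Fin d₁ × Fin d₂ × Fin d₃ × Fin d₄ → ℂ) : ℝ :=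
  conc fun p : Fin d₁ × (Fin d₂ × Fin d₃ × Fin d₄) => ψ (p.1, p.2)

/-- Bipartition concurrence `C_{2|134}`. -/
noncomputable def C2 (ψ : Fin d₁ × Fin d₂ × Fin d₃ × Fin d₄ → ℂ) : ℝ :=
  conc fun p : Fin d₂ × (Fin d₁ × Fin d₃ × Fin d₄) => ψ (p.2.1, p.1, p.2.2)

/-- Bipartition concurrence `C_{3|124}`. -/
noncomputable def C3 (ψ : Fin d₁ × Fin d₂ × Fin d₃ × Fin d₄ → ℂ) : ℝ :=
  conc fun p : Fin d₃ × (Fin d₁ × Fin d₂ × Fin d₄) => ψ (p.2.1, p.2.2.1, p.1, p.2.2.2)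

/-- Bipartition concurrence `C_{4|123}`. -/
noncomputable def C4 (ψ : Fin d₁ × Fin d₂ × Fin d₃ × Fin d₄ → ℂ) : ℝ :=
  conc fun p : Fin d₄ × (Fin d₁ × Fin d₂ × Fin d₃) => ψ (p.2.1, p.2.2.1, p.2.2.2, p.1)

/-- Bipartition concurrence `C_{12|34}`. -/
noncomputable def C12 (ψ : Fin d₁ × Fin d₂ × Fin d₃ × Fin d₄ → ℂ) : ℝ :=
  conc fun p : (Fin d₁ × Fin d₂) × (Fin d₃ × Fin d₄) => ψ (p.1.1, p.1.2, p.2.1, p.2.2)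

/-- Bipartition concurrence `C_{13|24}`. -/
noncomputable def C13 (ψ : Fin d₁ × Fin d₂ × Fin d₃ × Fin d₄ → ℂ) : ℝ :=
  conc fun p : (Fin d₁ × Fin d₃) × (Fin d₂ × Fin d₄) => ψ (p.1.1, p.2.1, p.1.2, p.2.2)

/-- Bipartition concurrence `C_{14|23}`. -/
noncomputable def C14 (ψ : Fin d₁ × Fin d₂ × Fin d₃ × Fin d₄ → ℂ) : ℝ :=
  conc fun p : (Fin d₁ × Fin d₄) × (Fin d₂ × Fin d₃) => ψ (p.1.1, p.2.1, p.2.2, p.1.2)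

/-- Bottom edge length `a = (C_{1|234}·C_{2|134}·C_{3|124}·C_{4|123})^{1/4}`. -/
noncomputable def pyrA (ψ : Fin d₁ × Fin d₂ × Fin d₃ × Fin d₄ → ℂ) : ℝ :=
  (C1 ψ * C2 ψ * C3 ψ * C4 ψ) ^ ((1 : ℝ) / 4)

/-- Height `h = (C_{12|34}·C_{13|24}·C_{14|23})^{1/3}`. -/
noncomputable def pyrH (ψ : Fin d₁ × Fin d₂ × Fin d₃ × Fin d₄ → ℂ) : ℝ :=
  (C12 ψ * C13 ψ * C14 ψ) ^ ((1 : ℝ) / 3)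

/-- The concurrence rectangular pyramid measure `V₁₂₃₄(ψ) = (1/3)·a²·h`. -/
noncomputable def V1234 (ψ : Fin d₁ × Fin d₂ × Fin d₃ × Fin d₄ → ℂ) : ℝ :=
  (1 / 3 : ℝ) * (pyrA ψ) ^ 2 * pyrH ψ

end FourPartite

/-!
Regard a bipartite unit vector `φ` as a matrix with rows indexed by the first factor. The
Binet–Cauchy identity turns `2 (1 - Tr ρ²)` into the sum of the squared moduli of all its `2 × 2`
minors, so the concurrence vanishes exactly when the matrix has rank at most one, i.e. when `φ` is
a product. The pyramid volume is a product of positive powers of the seven concurrences.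
-/

section Minors

variable {ι R : Type*} [Fintype ι] [CommRing R]

theorem sum_sum_minor_mul_minor (a b c d : ι → R) :
    ∑ j, ∑ k, (a j * b k - a k * b j) * (c j * d k - c k * d j) =
      2 * ((a ⬝ᵥ c) * (b ⬝ᵥ d) - (a ⬝ᵥ d) * (b ⬝ᵥ c)) := by
  have dot_mul_dot (x y z w : ι → R) :
      (x ⬝ᵥ y) * (z ⬝ᵥ w) = ∑ j, ∑ k, x j * y j * (z k * w k) :=
    Fintype.sum_mul_sum _ _
  calc
    _ = (a ⬝ᵥ c) * (b ⬝ᵥ d) - (a ⬝ᵥ d) * (b ⬝ᵥ c)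
        - (b ⬝ᵥ c) * (a ⬝ᵥ d) + (b ⬝ᵥ d) * (a ⬝ᵥ c) := by
      simp only [dot_mul_dot, ← Finset.sum_sub_distrib, ← Finset.sum_add_distrib]
      exact Fintype.sum_congr _ _ fun j => Fintype.sum_congr _ _ fun k => by ring
    _ = 2 * ((a ⬝ᵥ c) * (b ⬝ᵥ d) - (a ⬝ᵥ d) * (b ⬝ᵥ c)) := by ring

theorem trace_sq_sub_trace_mul_self (M : Matrix ι ι R) :
    M.trace ^ 2 - (M * M).trace = ∑ i, ∑ i', (M i i * M i' i' - M i i' * M i' i) := by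
  simp only [Matrix.trace, Matrix.diag_apply, Matrix.mul_apply, sq, Fintype.sum_mul_sum,
    Finset.sum_sub_distrib]

end Minors

/-- A bipartite vector is a product state if it is an elementary tensor `u ⊗ v`; for a nonzero
vector this is separability. The zero vector is included. -/
def IsProductState {α β R : Type*} [Mul R] (φ : α × β → R) : Prop :=
  ∃ (u : α → R) (v : β → R), ∀ x, φ x = u x.1 * v x.2

theorem isProductState_iff_forall_mul_eq_mul {α β G : Type*} [CommGroupWithZero G]
    {φ : α × β → G} :
    IsProductState φ ↔ ∀ i i' j j', φ (i, j) * φ (i', j') = φ (i, j') * φ (i', j) := by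
  refine ⟨?_, fun h => ?_⟩
  · rintro ⟨u, v, huv⟩ i i' j j'
    simp only [huv]
    ac_rfl
  · by_cases hφ : ∃ x, φ x ≠ 0
    · -- A nonzero entry exhibits the matrix as its column times its normalised row.
      obtain ⟨⟨i₀, j₀⟩, h₀⟩ := hφ
      refine ⟨fun i => φ (i, j₀), fun j => φ (i₀, j) / φ (i₀, j₀), fun ⟨i, j⟩ => ?_⟩
      rw [← mul_div_assoc, eq_div_iff h₀, h i i₀ j j₀]
    · push Not at hφ
      exact ⟨0, 0, fun x => by simp [hφ x]⟩

theorem isProductState_comp_symm_iff {X α β R : Type*} [Mul R] (e : X ≃ α × β) {ψ : X → R} :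
    IsProductState (ψ ∘ e.symm) ↔
      ∃ (u : α → R) (v : β → R), ∀ x, ψ x = u (e x).1 * v (e x).2 :=
  exists_congr fun _ => exists_congr fun _ => e.symm.forall_congr fun {_} => by simp

section Concurrence

variable {α β : Type*} [Fintype β]

theorem redMat_apply_eq_dotProduct (φ : α × β → ℂ) (i i' : α) :
    redMat φ i i' = (fun j => φ (i, j)) ⬝ᵥ star (fun j => φ (i', j)) :=
  rfl

theorem sum_normSq_minor_eq_redMat (φ : α × β → ℂ) (i i' : α) :
    ∑ j, ∑ j', (Complex.normSq (φ (i, j) * φ (i', j') - φ (i, j') * φ (i', j)) : ℂ) =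
      2 * (redMat φ i i * redMat φ i' i' - redMat φ i i' * redMat φ i' i) := by
  simp only [redMat_apply_eq_dotProduct, ← sum_sum_minor_mul_minor,
    ← Complex.mul_conj, map_sub, map_mul, Pi.star_apply, starRingEnd_apply]

variable [Fintype α]

theorem trace_redMat (φ : α × β → ℂ) :
    (redMat φ).trace = ((∑ x, Complex.normSq (φ x) : ℝ) : ℂ) := by
  simp only [Matrix.trace, Matrix.diag_apply, redMat, Matrix.of_apply, Complex.mul_conj,
    Fintype.sum_prod_type, Complex.ofReal_sum]

theorem two_mul_sq_sub_purity_eq_sum_normSq_minor (φ : α × β → ℂ) :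
    2 * ((∑ x, Complex.normSq (φ x)) ^ 2 - (redMat φ * redMat φ).trace.re) =
      ∑ i, ∑ i', ∑ j, ∑ j',
        Complex.normSq (φ (i, j) * φ (i', j') - φ (i, j') * φ (i', j)) := by
  have identity : 2 * ((redMat φ).trace ^ 2 - (redMat φ * redMat φ).trace) =
      ((∑ i, ∑ i', ∑ j, ∑ j',
        Complex.normSq (φ (i, j) * φ (i', j') - φ (i, j') * φ (i', j)) : ℝ) : ℂ) := by
    simp only [trace_sq_sub_trace_mul_self, Complex.ofReal_sum, sum_normSq_minor_eq_redMat,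
      Finset.mul_sum]
  rw [trace_redMat, ← Complex.ofReal_pow] at identity
  simpa [-Complex.ofReal_pow, -Complex.ofReal_sum] using congrArg Complex.re identity

theorem conc_nonneg (φ : α × β → ℂ) : 0 ≤ conc φ :=
  Real.sqrt_nonneg _

theorem conc_eq_sqrt_sum_normSq_minor {φ : α × β → ℂ} (hφ : ∑ x, Complex.normSq (φ x) = 1) :
    conc φ = √(∑ i, ∑ i', ∑ j, ∑ j',
      Complex.normSq (φ (i, j) * φ (i', j') - φ (i, j') * φ (i', j))) := by
  rw [conc, ← two_mul_sq_sub_purity_eq_sum_normSq_minor, hφ, one_pow]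

theorem conc_eq_zero_iff {φ : α × β → ℂ} (hφ : ∑ x, Complex.normSq (φ x) = 1) :
    conc φ = 0 ↔ IsProductState φ := by
  rw [conc_eq_sqrt_sum_normSq_minor hφ, isProductState_iff_forall_mul_eq_mul]
  simp only [← Fintype.sum_prod_type']
  rw [Real.sqrt_eq_zero (Fintype.sum_nonneg fun _ => Complex.normSq_nonneg _),
    Fintype.sum_eq_zero_iff_of_nonneg fun _ => Complex.normSq_nonneg _]
  simp only [funext_iff, Prod.forall, Pi.zero_apply, Complex.normSq_eq_zero, sub_eq_zero]

theorem conc_comp_symm_ne_zero_iff {X : Type*} [Fintype X] (e : X ≃ α × β) {ψ : X → ℂ}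
    (hψ : ∑ x, Complex.normSq (ψ x) = 1) :
    conc (ψ ∘ e.symm) ≠ 0 ↔
      ¬ ∃ (u : α → ℂ) (v : β → ℂ), ∀ x, ψ x = u (e x).1 * v (e x).2 := by
  have unit : ∑ p, Complex.normSq ((ψ ∘ e.symm) p) = 1 :=
    (e.symm.sum_comp fun x => Complex.normSq (ψ x)).trans hψ
  exact ((conc_eq_zero_iff unit).trans (isProductState_comp_symm_iff e)).not

end Concurrence

section Cuts

variable {α β γ δ : Type*}

/-- The bipartition `2|134` as a regrouping of the indices. -/
def cut2 : α × β × γ × δ ≃ β × (α × γ × δ) where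
  toFun x := (x.2.1, x.1, x.2.2)
  invFun p := (p.2.1, p.1, p.2.2)

/-- The bipartition `3|124` as a regrouping of the indices. -/
def cut3 : α × β × γ × δ ≃ γ × (α × β × δ) where
  toFun x := (x.2.2.1, x.1, x.2.1, x.2.2.2)
  invFun p := (p.2.1, p.2.2.1, p.1, p.2.2.2)

/-- The bipartition `4|123` as a regrouping of the indices. -/
def cut4 : α × β × γ × δ ≃ δ × (α × β × γ) where
  toFun x := (x.2.2.2, x.1, x.2.1, x.2.2.1)
  invFun p := (p.2.1, p.2.2.1, p.2.2.2, p.1)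

/-- The bipartition `13|24` as a regrouping of the indices. -/
def cut13 : α × β × γ × δ ≃ (α × γ) × (β × δ) where
  toFun x := ((x.1, x.2.2.1), (x.2.1, x.2.2.2))
  invFun p := (p.1.1, p.2.1, p.1.2, p.2.2)

/-- The bipartition `14|23` as a regrouping of the indices. -/
def cut14 : α × β × γ × δ ≃ (α × δ) × (β × γ) where
  toFun x := ((x.1, x.2.2.2), (x.2.1, x.2.2.1))
  invFun p := (p.1.1, p.2.1, p.2.2, p.1.2)

end Cuts

section Pyramid

variable {d₁ d₂ d₃ d₄ : ℕ} (ψ : Fin d₁ × Fin d₂ × Fin d₃ × Fin d₄ → ℂ)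

theorem prod_conc_single_nonneg : 0 ≤ C1 ψ * C2 ψ * C3 ψ * C4 ψ :=
  mul_nonneg (mul_nonneg (mul_nonneg (conc_nonneg _) (conc_nonneg _)) (conc_nonneg _))
    (conc_nonneg _)

theorem prod_conc_pair_nonneg : 0 ≤ C12 ψ * C13 ψ * C14 ψ :=
  mul_nonneg (mul_nonneg (conc_nonneg _) (conc_nonneg _)) (conc_nonneg _)

theorem pyrA_ne_zero_iff :
    pyrA ψ ≠ 0 ↔ C1 ψ ≠ 0 ∧ C2 ψ ≠ 0 ∧ C3 ψ ≠ 0 ∧ C4 ψ ≠ 0 := by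
  rw [pyrA, Real.rpow_ne_zero (prod_conc_single_nonneg ψ) (by norm_num)]
  simp only [mul_ne_zero_iff, and_assoc]

theorem pyrH_ne_zero_iff : pyrH ψ ≠ 0 ↔ C12 ψ ≠ 0 ∧ C13 ψ ≠ 0 ∧ C14 ψ ≠ 0 := by
  rw [pyrH, Real.rpow_ne_zero (prod_conc_pair_nonneg ψ) (by norm_num)]
  simp only [mul_ne_zero_iff, and_assoc]

theorem V1234_nonneg : 0 ≤ V1234 ψ :=
  mul_nonneg (by positivity) (Real.rpow_nonneg (prod_conc_pair_nonneg ψ) _)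

theorem V1234_pos_iff_conc_ne_zero :
    0 < V1234 ψ ↔ C1 ψ ≠ 0 ∧ C2 ψ ≠ 0 ∧ C3 ψ ≠ 0 ∧ C4 ψ ≠ 0 ∧
      C12 ψ ≠ 0 ∧ C13 ψ ≠ 0 ∧ C14 ψ ≠ 0 := by
  have volume_ne_zero : V1234 ψ ≠ 0 ↔ pyrA ψ ≠ 0 ∧ pyrH ψ ≠ 0 := by
    simp [V1234]
  rw [(V1234_nonneg ψ).lt_iff_ne', volume_ne_zero, pyrA_ne_zero_iff, pyrH_ne_zero_iff]
  simp only [and_assoc]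

end Pyramid

/-- `V₁₂₃₄(ψ) > 0` iff `ψ` is genuinely multipartite entangled, i.e. `ψ` is not a
product across any of the seven bipartitions `1|234, 2|134, 3|124, 4|123, 12|34, 13|24, 14|23`. -/
theorem V1234_pos_iff_GME {d₁ d₂ d₃ d₄ : ℕ}
    (ψ : Fin d₁ × Fin d₂ × Fin d₃ × Fin d₄ → ℂ)
    (hψ : ∑ x : Fin d₁ × Fin d₂ × Fin d₃ × Fin d₄, Complex.normSq (ψ x) = 1) :
    0 < V1234 ψ ↔
      (¬ ∃ (u : Fin d₁ → ℂ) (v : Fin d₂ × Fin d₃ × Fin d₄ → ℂ),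
          ∀ x : Fin d₁ × Fin d₂ × Fin d₃ × Fin d₄, ψ x = u x.1 * v x.2) ∧
      (¬ ∃ (u : Fin d₂ → ℂ) (v : Fin d₁ × Fin d₃ × Fin d₄ → ℂ),
          ∀ x : Fin d₁ × Fin d₂ × Fin d₃ × Fin d₄, ψ x = u x.2.1 * v (x.1, x.2.2)) ∧
      (¬ ∃ (u : Fin d₃ → ℂ) (v : Fin d₁ × Fin d₂ × Fin d₄ → ℂ),
          ∀ x : Fin d₁ × Fin d₂ × Fin d₃ × Fin d₄, ψ x = u x.2.2.1 * v (x.1, x.2.1, x.2.2.2)) ∧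
      (¬ ∃ (u : Fin d₄ → ℂ) (v : Fin d₁ × Fin d₂ × Fin d₃ → ℂ),
          ∀ x : Fin d₁ × Fin d₂ × Fin d₃ × Fin d₄, ψ x = u x.2.2.2 * v (x.1, x.2.1, x.2.2.1)) ∧
      (¬ ∃ (u : Fin d₁ × Fin d₂ → ℂ) (v : Fin d₃ × Fin d₄ → ℂ),
          ∀ x : Fin d₁ × Fin d₂ × Fin d₃ × Fin d₄, ψ x = u (x.1, x.2.1) * v x.2.2) ∧
      (¬ ∃ (u : Fin d₁ × Fin d₃ → ℂ) (v : Fin d₂ × Fin d₄ → ℂ),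
          ∀ x : Fin d₁ × Fin d₂ × Fin d₃ × Fin d₄, ψ x = u (x.1, x.2.2.1) * v (x.2.1, x.2.2.2)) ∧
      (¬ ∃ (u : Fin d₁ × Fin d₄ → ℂ) (v : Fin d₂ × Fin d₃ → ℂ),
          ∀ x : Fin d₁ × Fin d₂ × Fin d₃ × Fin d₄, ψ x = u (x.1, x.2.2.2) * v (x.2.1, x.2.2.1)) := by
  rw [V1234_pos_iff_conc_ne_zero]
  refine and_congr ?_ (and_congr ?_ (and_congr ?_ (and_congr ?_ (and_congr ?_ (and_congr ?_ ?_)))))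
  · exact conc_comp_symm_ne_zero_iff (Equiv.refl _) hψ
  · exact conc_comp_symm_ne_zero_iff cut2 hψ
  · exact conc_comp_symm_ne_zero_iff cut3 hψ
  · exact conc_comp_symm_ne_zero_iff cut4 hψ
  · exact conc_comp_symm_ne_zero_iff (Equiv.prodAssoc _ _ _).symm hψ
  · exact conc_comp_symm_ne_zero_iff cut13 hψ
  · exact conc_comp_symm_ne_zero_iff cut14 hψ
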